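/- There is a uniform constant C such that for all scalar u, v ∈ C₀^∞(ℝ×ℝ³) and all t ≥ 0: ∫_{ℝ³} (⟨t−r⟩/⟨t+r⟩) |∂²u(t,x)| |v'(t,x)| ⟨x⟩^{−1} dx ≤ C⟨t⟩^{−1}( Σ_{|α|≤1} ‖Γ^α u'(t,·)‖₂ + ‖⟨t+r⟩□u(t,·)‖₂ ) · ‖⟨x⟩^{−1} v'(t,·)‖₂, where |∂²u| denotes the sum of absolute values of all second space-time derivatives of u. -/

import Mathlib

open MeasureTheory Real Finset

noncomputable section

/-- Points of space-time `ℝ×ℝ³`, written `X = (x₀,x₁,x₂,x₃)` with `x₀ = t`. -/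
abbrev Pt : Type := Fin 4 → ℝ
/-- Points of space `ℝ³`. -/
abbrev Sp : Type := Fin 3 → ℝ

/-- Space-time partial derivative `∂_a`. -/
def pd (a : Fin 4) (u : Pt → ℝ) : Pt → ℝ := fun X => fderiv ℝ u X (Pi.single a 1)

/-- Rotation field `Ω_{ij} = x_i ∂_j - x_j ∂_i` (space-time indices). -/
def rot (i j : Fin 4) (u : Pt → ℝ) : Pt → ℝ := fun X => X i * pd j u X - X j * pd i u X

/-- Scaling field `S = t ∂_t + x·∇_x = x^a ∂_a`. -/
def scal (u : Pt → ℝ) : Pt → ℝ := fun X => ∑ a, X a * pd a u X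

/-- The eight vector fields `Γ = (∂, Ω, S)`. -/
def Gam : Fin 8 → (Pt → ℝ) → Pt → ℝ :=
  ![pd 0, pd 1, pd 2, pd 3, rot 1 2, rot 1 3, rot 2 3, scal]

/-- `Γ^α` for a multi-index `α` (a word in the eight fields) of length `m`. -/
def GamComp : ∀ {m : ℕ}, (Fin m → Fin 8) → (Pt → ℝ) → Pt → ℝ
  | 0, _, u => u
  | _ + 1, α, u => Gam (α 0) (GamComp (fun i => α i.succ) u)

/-- Euclidean length `r = |x|` of a spatial point. -/
def rad (x : Sp) : ℝ := Real.sqrt (∑ i, (x i) ^ 2)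

/-- Japanese bracket `⟨z⟩ = (1+z²)^{1/2}`. -/
def jb (z : ℝ) : ℝ := Real.sqrt (1 + z ^ 2)

/-- Euclidean norm `|∂u|` of the space-time gradient. -/
def gradNorm (u : Pt → ℝ) (X : Pt) : ℝ := Real.sqrt (∑ a, (pd a u X) ^ 2)

/-- The unit-speed d'Alembertian `□ = ∂_t² - Δ_x`. -/
def box1 (u : Pt → ℝ) : Pt → ℝ := fun X =>
  pd 0 (pd 0 u) X - ∑ j : Fin 3, pd j.succ (pd j.succ u) X

/-- The d'Alembertian `∂_t² - c²Δ_x` with speed `c`. -/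
def boxc (c : ℝ) (u : Pt → ℝ) : Pt → ℝ := fun X =>
  pd 0 (pd 0 u) X - c ^ 2 * ∑ j : Fin 3, pd j.succ (pd j.succ u) X

/-- The recurring right-hand factor
`Σ_{|α|≤1}‖Γ^α u'(t,·)‖₂ + ‖⟨t+r⟩(∂_t²-c²Δ)u(t,·)‖₂`. -/
def Qfac (cs : ℝ) (u : Pt → ℝ) (t : ℝ) : ℝ :=
  (∑ m ∈ Finset.range 2, ∑ α : Fin m → Fin 8,
      (∫ x : Sp, ∑ a, (GamComp α (pd a u) (Fin.cons t x)) ^ 2) ^ ((1:ℝ)/2))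
    + (∫ x : Sp, jb (t + rad x) ^ 2 * (boxc cs u (Fin.cons t x)) ^ 2) ^ ((1:ℝ)/2)

/-- `|∂²u|`: the sum of the absolute values of all second space-time derivatives. -/
def d2abs (u : Pt → ℝ) (X : Pt) : ℝ := ∑ a, ∑ b, |pd a (pd b u) X|


/-- The weight `ρ = (t²-r²)²/(1+t²+r²)`. -/
def rho (X : Pt) : ℝ :=
  (X 0 ^ 2 - (X 1 ^ 2 + X 2 ^ 2 + X 3 ^ 2)) ^ 2 / (1 + X 0 ^ 2 + (X 1 ^ 2 + X 2 ^ 2 + X 3 ^ 2))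

/-- The sum of squares of scaling and rotation expressions. -/
def GG (X : Pt) (D : Fin 4 → Fin 4 → ℝ) : ℝ :=
  ∑ b, ((∑ a, X a * D a b) ^ 2 + (X 1 * D 2 b - X 2 * D 1 b) ^ 2
    + (X 1 * D 3 b - X 3 * D 1 b) ^ 2 + (X 2 * D 3 b - X 3 * D 2 b) ^ 2)

lemma rho_nonneg (X : Pt) : 0 ≤ rho X := by unfold rho; positivity

lemma GG_nonneg (X : Pt) (D : Fin 4 → Fin 4 → ℝ) : 0 ≤ GG X D := by
  unfold GG; positivity

lemma alg_R (X : Pt) (D : Fin 4 → Fin 4 → ℝ) (hD : ∀ a b, D a b = D b a) :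
    (X 0 ^ 2 * D 0 0 - (X 1 ^ 2 + X 2 ^ 2 + X 3 ^ 2) * (D 1 1 + D 2 2 + D 3 3)) ^ 2
      ≤ 3 * (X 0 ^ 2 + (X 1 ^ 2 + X 2 ^ 2 + X 3 ^ 2)) * GG X D := by
  have h := Finset.sum_mul_sq_le_sq_mul_sq (Finset.univ : Finset (Fin 10))
    ![X 0, -X 1, -X 2, -X 3, -X 1, -X 1, X 2, -X 2, X 3, X 3]
    ![∑ a, X a * D a 0, ∑ a, X a * D a 1, ∑ a, X a * D a 2, ∑ a, X a * D a 3,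
      X 1 * D 2 2 - X 2 * D 1 2, X 1 * D 3 3 - X 3 * D 1 3, X 1 * D 2 1 - X 2 * D 1 1,
      X 2 * D 3 3 - X 3 * D 2 3, X 1 * D 3 1 - X 3 * D 1 1, X 2 * D 3 2 - X 3 * D 2 2]
  simp only [Fin.sum_univ_succ, Fin.sum_univ_zero, GG] at h ⊢
  simp at h ⊢
  rw [hD 1 0, hD 2 0, hD 3 0, hD 2 1, hD 3 1, hD 3 2] at *
  generalize D 0 0 = d00 at *
  generalize D 0 1 = d01 at *
  generalize D 0 2 = d02 at *
  generalize D 0 3 = d03 at *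
  generalize D 1 1 = d11 at *
  generalize D 1 2 = d12 at *
  generalize D 1 3 = d13 at *
  generalize D 2 2 = d22 at *
  generalize D 2 3 = d23 at *
  generalize D 3 3 = d33 at *
  generalize X 0 = t at *
  generalize X 1 = x at *
  generalize X 2 = y at *
  generalize X 3 = z at *
  refine le_trans (le_of_eq ?_) (h.trans ?_)
  · ring
  · apply mul_le_mul
    · nlinarith [sq_nonneg t]
    · linarith [sq_nonneg (x * d02 - y * d01), sq_nonneg (x * d03 - z * d01),
        sq_nonneg (y * d03 - z * d02), sq_nonneg (x * d23 - y * d13),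
        sq_nonneg (x * d23 - z * d12), sq_nonneg (y * d13 - z * d12)]
    · positivity
    · positivity

lemma alg_LT (X : Pt) (D : Fin 4 → Fin 4 → ℝ) (hD : ∀ a b, D a b = D b a) :
    rho X * (D 1 1 + D 2 2 + D 3 3) ^ 2 ≤ 6 * GG X D +
        2 * ((X 0 ^ 2 + (X 1 ^ 2 + X 2 ^ 2 + X 3 ^ 2)) * (D 0 0 - (D 1 1 + D 2 2 + D 3 3)) ^ 2) ∧
    rho X * D 0 0 ^ 2 ≤ 6 * GG X D +
        2 * ((X 0 ^ 2 + (X 1 ^ 2 + X 2 ^ 2 + X 3 ^ 2)) * (D 0 0 - (D 1 1 + D 2 2 + D 3 3)) ^ 2) := by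
  have h := alg_R X D hD
  have hG := GG_nonneg X D
  unfold rho
  generalize GG X D = G at *
  have hs : 0 ≤ X 1 ^ 2 + X 2 ^ 2 + X 3 ^ 2 := by positivity
  have ht : 0 ≤ X 0 ^ 2 := by positivity
  generalize X 1 ^ 2 + X 2 ^ 2 + X 3 ^ 2 = s at *
  generalize D 1 1 + D 2 2 + D 3 3 = L at *
  generalize D 0 0 = T at *
  generalize X 0 ^ 2 = τ at *
  have hN : 0 ≤ τ + s := by positivity
  have hB : 0 ≤ (T - L) ^ 2 := sq_nonneg _
  have key : ∀ c, 0 ≤ c → c ≤ τ + s →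
      2 * (τ * T - s * L) ^ 2 + 2 * (c * (T - L)) ^ 2
        ≤ (6 * G + 2 * ((τ + s) * (T - L) ^ 2)) * (1 + τ + s) := by
    intro c hc hc2
    have : c ^ 2 ≤ (τ + s) ^ 2 := by gcongr
    have h2 := mul_le_mul_of_nonneg_right this hB
    have h3 := mul_nonneg hN hB
    nlinarith
  constructor
  · rw [div_mul_eq_mul_div, div_le_iff₀ (by positivity)]
    refine le_trans ?_ (key τ ht (by linarith))
    nlinarith [sq_nonneg ((τ * T - s * L) + τ * (T - L))]
  · rw [div_mul_eq_mul_div, div_le_iff₀ (by positivity)]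
    refine le_trans ?_ (key s hs (by linarith))
    nlinarith [sq_nonneg ((τ * T - s * L) + s * (T - L))]

lemma rho_le (X : Pt) : rho X ≤ X 0 ^ 2 + (X 1 ^ 2 + X 2 ^ 2 + X 3 ^ 2) := by
  unfold rho
  rw [div_le_iff₀ (by positivity)]
  have hs : 0 ≤ X 1 ^ 2 + X 2 ^ 2 + X 3 ^ 2 := by positivity
  have ht : 0 ≤ X 0 ^ 2 := by positivity
  generalize X 1 ^ 2 + X 2 ^ 2 + X 3 ^ 2 = s at *
  generalize X 0 ^ 2 = τ at *
  nlinarith [mul_nonneg hs ht]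

lemma alg_H0 (X : Pt) (D : Fin 4 → Fin 4 → ℝ) (hD : ∀ a b, D a b = D b a) :
    (X 0 ^ 2 + (X 1 ^ 2 + X 2 ^ 2 + X 3 ^ 2)) * (D 0 1 ^ 2 + D 0 2 ^ 2 + D 0 3 ^ 2) ≤
      8 * GG X D + 2 * (X 0 ^ 2 + (X 1 ^ 2 + X 2 ^ 2 + X 3 ^ 2)) *
        ((D 1 1 + D 2 2 + D 3 3) ^ 2 + D 0 0 ^ 2) := by
  simp only [GG, Fin.sum_univ_four]
  rw [hD 1 0, hD 2 0, hD 3 0, hD 2 1, hD 3 1, hD 3 2]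
  generalize D 0 0 = T
  generalize D 0 1 = h1
  generalize D 0 2 = h2
  generalize D 0 3 = h3
  generalize D 1 1 = d11
  generalize D 1 2 = d12
  generalize D 1 3 = d13
  generalize D 2 2 = d22
  generalize D 2 3 = d23
  generalize D 3 3 = d33
  generalize X 0 = t
  generalize X 1 = x
  generalize X 2 = y
  generalize X 3 = z
  have q1 : (x ^ 2 + y ^ 2 + z ^ 2) * (h1 ^ 2 + h2 ^ 2 + h3 ^ 2) ≤
      2 * (t * T + x * h1 + y * h2 + z * h3) ^ 2 + 2 * t ^ 2 * T ^ 2 +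
      (x * h2 - y * h1) ^ 2 + (x * h3 - z * h1) ^ 2 + (y * h3 - z * h2) ^ 2 := by
    nlinarith [sq_nonneg (t * T + (t * T + x * h1 + y * h2 + z * h3))]
  have aux : ∀ h a S o1 o2 : ℝ, h = -a + (S + o1 + o2) →
      h ^ 2 ≤ 2 * a ^ 2 + 6 * (S ^ 2 + o1 ^ 2 + o2 ^ 2) := by
    rintro h a S o1 o2 rfl
    nlinarith [sq_nonneg (a + (S + o1 + o2)), sq_nonneg (S - o1), sq_nonneg (S - o2),
      sq_nonneg (o1 - o2)]
  have p1 := aux (t * h1) (x * (d11 + d22 + d33)) (t * h1 + x * d11 + y * d12 + z * d13)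
    (x * d22 - y * d12) (x * d33 - z * d13) (by ring)
  have p2 := aux (t * h2) (y * (d11 + d22 + d33)) (t * h2 + x * d12 + y * d22 + z * d23)
    (-(x * d12 - y * d11)) (y * d33 - z * d23) (by ring)
  have p3 := aux (t * h3) (z * (d11 + d22 + d33)) (t * h3 + x * d13 + y * d23 + z * d33)
    (-(x * d13 - z * d11)) (-(y * d23 - z * d22)) (by ring)
  have n1 := sq_nonneg (x * h2 - y * h1)
  have n2 := sq_nonneg (x * h3 - z * h1)
  have n3 := sq_nonneg (y * h3 - z * h2)
  have n4 := sq_nonneg (x * d23 - y * d13)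
  have n5 := sq_nonneg (x * d23 - z * d12)
  have n6 := sq_nonneg (y * d13 - z * d12)
  have n7 := sq_nonneg (t * T + x * h1 + y * h2 + z * h3)
  have n8 := sq_nonneg (t * h1 + x * d11 + y * d12 + z * d13)
  have n9 := sq_nonneg (t * h2 + x * d12 + y * d22 + z * d23)
  have n10 := sq_nonneg (t * h3 + x * d13 + y * d23 + z * d33)
  have m1 := sq_nonneg (x * d22 - y * d12)
  have m2 := sq_nonneg (x * d33 - z * d13)
  have m3 := sq_nonneg (x * d12 - y * d11)
  have m4 := sq_nonneg (y * d33 - z * d23)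
  have m5 := sq_nonneg (x * d13 - z * d11)
  have m6 := sq_nonneg (y * d23 - z * d22)
  have k1 : 0 ≤ t ^ 2 * (d11 + d22 + d33) ^ 2 := by positivity
  have k2 : 0 ≤ (x ^ 2 + y ^ 2 + z ^ 2) * T ^ 2 := by positivity
  rw [neg_sq] at p2 p3
  rw [neg_sq] at p3
  rw [mul_pow, mul_pow x] at p1
  rw [mul_pow, mul_pow y] at p2
  rw [mul_pow, mul_pow z] at p3
  linarith

lemma alg_H (X : Pt) (D : Fin 4 → Fin 4 → ℝ) (hD : ∀ a b, D a b = D b a) :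
    rho X * (D 0 1 ^ 2 + D 0 2 ^ 2 + D 0 3 ^ 2) ≤ 32 * GG X D +
      8 * ((X 0 ^ 2 + (X 1 ^ 2 + X 2 ^ 2 + X 3 ^ 2)) * (D 0 0 - (D 1 1 + D 2 2 + D 3 3)) ^ 2) := by
  obtain ⟨h1, h2⟩ := alg_LT X D hD
  have h3 := alg_H0 X D hD
  have h4 := rho_le X
  have h5 := rho_nonneg X
  have hG := GG_nonneg X D
  suffices rho X * (D 0 1 ^ 2 + D 0 2 ^ 2 + D 0 3 ^ 2) ≤
      8 * GG X D + 2 * (rho X * (D 1 1 + D 2 2 + D 3 3) ^ 2 + rho X * D 0 0 ^ 2) by linarith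
  have hH : 0 ≤ D 0 1 ^ 2 + D 0 2 ^ 2 + D 0 3 ^ 2 := by positivity
  generalize D 0 1 ^ 2 + D 0 2 ^ 2 + D 0 3 ^ 2 = H at *
  have hN : 0 ≤ X 0 ^ 2 + (X 1 ^ 2 + X 2 ^ 2 + X 3 ^ 2) := by positivity
  clear h1 h2
  generalize X 0 ^ 2 + (X 1 ^ 2 + X 2 ^ 2 + X 3 ^ 2) = N at *
  rcases hN.eq_or_lt with h0 | h0
  · have : rho X = 0 := by linarith
    simp only [this]; linarith
  · refine le_of_mul_le_mul_left ?_ h0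
    have a1 := mul_le_mul_of_nonneg_left h3 h5
    have a2 := mul_le_mul_of_nonneg_right h4 hG
    linarith

/-- Absorption, in abstract form. -/
lemma alg_abs (X : Pt) (f ρ' : Fin 3 → ℝ) (h : Fin 3 → Fin 3 → ℝ)
    (hρ : ∀ i, (ρ' i) ^ 2 ≤ 36 * rho X) :
    rho X * ∑ i, ∑ j, h i j ^ 2 ≤ 4 * (rho X * (∑ i, h i i) ^ 2) + 10000 * ∑ j, f j ^ 2 +
      2 * ∑ i, ∑ j, (rho X * (h i j ^ 2 - h i i * h j j)
        + (ρ' i * f j * h i j - ρ' j * f j * h i i)) := by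
  have hr := rho_nonneg X
  have t1 : ∀ i j k l : Fin 3, ρ' i * f j * h k l ≤ rho X * h k l ^ 2 / 16 + 144 * f j ^ 2 ∧
      -(ρ' i * f j * h k l) ≤ rho X * h k l ^ 2 / 16 + 144 * f j ^ 2 := by
    intro i j k l
    have a := mul_le_mul_of_nonneg_right (hρ i) (sq_nonneg (h k l))
    constructor
    · nlinarith [sq_nonneg (ρ' i * h k l / 24 - 12 * f j)]
    · nlinarith [sq_nonneg (ρ' i * h k l / 24 + 12 * f j)]
  have t2 : ∀ i j : Fin 3, -(ρ' i * f j * h i j - ρ' j * f j * h i i) ≤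
      rho X * h i j ^ 2 / 16 + rho X * h i i ^ 2 / 16 + 288 * f j ^ 2 := by
    intro i j
    linarith [(t1 i j i j).2, (t1 j j i i).1]
  have t3 : ∀ i, 0 ≤ rho X * h i i ^ 2 := fun i => by positivity
  have t4 : ∀ i j, 0 ≤ rho X * h i j ^ 2 := fun i j => by positivity
  have t5 : 0 ≤ rho X * (h 0 0 + h 1 1 + h 2 2) ^ 2 := by positivity
  simp only [Fin.sum_univ_three]
  linarith [t2 0 0, t2 0 1, t2 0 2, t2 1 0, t2 1 1, t2 1 2, t2 2 0, t2 2 1, t2 2 2,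
    t4 0 0, t4 0 1, t4 0 2, t4 1 0, t4 1 1, t4 1 2, t4 2 0, t4 2 1, t4 2 2,
    sq_nonneg (f 0), sq_nonneg (f 1), sq_nonneg (f 2)]

lemma smooth_pd {u : Pt → ℝ} (hu : ContDiff ℝ (⊤ : ℕ∞) u) (a : Fin 4) :
    ContDiff ℝ (⊤ : ℕ∞) (pd a u) := by
  unfold pd
  exact (hu.fderiv_right (m := (⊤ : ℕ∞)) (by simp)).clm_apply contDiff_const

lemma pd_off {u : Pt → ℝ} {X : Pt} (a : Fin 4) (hX : X ∉ tsupport u) : pd a u X = 0 := by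
  simp [pd, fderiv_of_notMem_tsupport ℝ hX]

lemma tsupport_pd (u : Pt → ℝ) (a : Fin 4) : tsupport (pd a u) ⊆ tsupport u :=
  tsupport_fderiv_apply_subset ℝ _

lemma pd_pd_off {u : Pt → ℝ} {X : Pt} (a b : Fin 4) (hX : X ∉ tsupport u) :
    pd a (pd b u) X = 0 :=
  pd_off a (fun h => hX (tsupport_pd u b h))

lemma pd_pd_eq {u : Pt → ℝ} (hu : ContDiff ℝ (⊤ : ℕ∞) u) (a b : Fin 4) (X : Pt) :
    pd a (pd b u) X = fderiv ℝ (fderiv ℝ u) X (Pi.single a 1) (Pi.single b 1) := by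
  have hd : DifferentiableAt ℝ (fderiv ℝ u) X :=
    ((hu.fderiv_right (m := (⊤ : ℕ∞)) (by simp)).differentiable (by simp)) X
  have : pd b u = fun Y => fderiv ℝ u Y (Pi.single b 1) := rfl
  rw [this]
  unfold pd
  rw [fderiv_clm_apply hd (differentiableAt_const _)]
  simp

lemma pd_comm {u : Pt → ℝ} (hu : ContDiff ℝ (⊤ : ℕ∞) u) (a b : Fin 4) (X : Pt) :
    pd a (pd b u) X = pd b (pd a u) X := by
  rw [pd_pd_eq hu, pd_pd_eq hu]
  have := (hu.contDiffAt (x := X)).isSymmSndFDerivAt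
    (by simpa using (WithTop.coe_le_coe.2 (le_top : (2 : ℕ∞) ≤ ⊤)))
  exact this _ _

lemma cons_cont (t : ℝ) : Continuous (fun x : Sp => (Fin.cons t x : Pt)) := by
  refine continuous_pi fun i => ?_
  refine Fin.cases ?_ (fun j => ?_) i
  · simpa using continuous_const
  · simpa using continuous_apply j

lemma slice_compact {u : Pt → ℝ} (hc : HasCompactSupport u) (t : ℝ) {g : Sp → ℝ}
    (hz : ∀ x, (Fin.cons t x : Pt) ∉ tsupport u → g x = 0) : HasCompactSupport g := by
  have hK : IsCompact ((fun X : Pt => (fun i : Fin 3 => X i.succ : Sp)) '' tsupport u) :=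
    hc.isCompact.image (by fun_prop)
  refine HasCompactSupport.intro hK ?_
  intro x hx
  apply hz
  intro h
  exact hx ⟨_, h, by ext i; simp⟩

lemma slice_int {u : Pt → ℝ} (hc : HasCompactSupport u) (t : ℝ) {g : Sp → ℝ} (hg : Continuous g)
    (hz : ∀ x, (Fin.cons t x : Pt) ∉ tsupport u → g x = 0) : Integrable g :=
  hg.integrable_of_hasCompactSupport (slice_compact hc t hz)

lemma slice_hasFDerivAt {V : Pt → ℝ} (hV : ContDiff ℝ (⊤ : ℕ∞) V) (t : ℝ) (x : Sp) (i : Fin 3) :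
    fderiv ℝ (fun x : Sp => V (Fin.cons t x)) x (Pi.single i 1) = pd i.succ V (Fin.cons t x) := by
  have h1 : HasFDerivAt (fun x : Sp => (Fin.cons t x : Pt))
      (ContinuousLinearMap.pi (fun k : Fin 4 =>
        Fin.cases (0 : Sp →L[ℝ] ℝ) (fun j => ContinuousLinearMap.proj j) k)) x := by
    rw [hasFDerivAt_pi]
    intro k
    refine Fin.cases ?_ (fun j => ?_) k
    · simpa using hasFDerivAt_const t x
    · simpa using hasFDerivAt_apply j x
  have h2 := ((hV.differentiable (by simp)) (Fin.cons t x)).hasFDerivAt.comp x h1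
  have h3 := h2.fderiv
  simp only [Function.comp_def] at h3
  rw [h3]
  unfold pd
  rw [ContinuousLinearMap.comp_apply]
  congr 1
  ext k
  refine Fin.cases ?_ (fun j => ?_) k
  · simp
  · simp [Pi.single_apply]

lemma slice_div {V : Pt → ℝ} (hV : ContDiff ℝ (⊤ : ℕ∞) V) (hc : HasCompactSupport V) (t : ℝ)
    (i : Fin 3) : ∫ x : Sp, pd i.succ V (Fin.cons t x) = 0 := by
  have hint : Integrable (fun x : Sp => V (Fin.cons t x)) :=
    slice_int hc t (hV.continuous.comp (cons_cont t)) (fun x hx => image_eq_zero_of_notMem_tsupport hx)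
  have hint' : Integrable (fun x : Sp => pd i.succ V (Fin.cons t x)) :=
    slice_int hc t ((smooth_pd hV _).continuous.comp (cons_cont t)) (fun x hx => pd_off _ hx)
  have hdiff : Differentiable ℝ (fun x : Sp => V (Fin.cons t x)) := by
    have : Differentiable ℝ (fun x : Sp => (Fin.cons t x : Pt)) := by
      rw [differentiable_pi]
      intro k
      refine Fin.cases ?_ (fun j => ?_) k
      · simp
      · simpa using differentiable_apply j
    exact (hV.differentiable (by simp)).comp this
  have := integral_mul_fderiv_eq_neg_fderiv_mul_of_integrable (μ := (volume : Measure Sp))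
    (f := fun _ : Sp => (1 : ℝ)) (g := fun x : Sp => V (Fin.cons t x)) (v := Pi.single i 1)
    (by simp) (by simpa [slice_hasFDerivAt hV] using hint') (by simpa using hint)
    (by simp) (fun x _ => hdiff x)
  simpa [slice_hasFDerivAt hV] using this

lemma pd_mul {f g : Pt → ℝ} (hf : ContDiff ℝ (⊤ : ℕ∞) f) (hg : ContDiff ℝ (⊤ : ℕ∞) g)
    (a : Fin 4) (X : Pt) : pd a (fun Y => f Y * g Y) X = pd a f X * g X + f X * pd a g X := by
  unfold pd
  rw [fderiv_fun_mul (hf.differentiable (by simp) X) (hg.differentiable (by simp) X)]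
  simp
  ring

lemma rho_smooth : ContDiff ℝ (⊤ : ℕ∞) rho := by
  unfold rho
  apply ContDiff.div
  · fun_prop
  · fun_prop
  · intro X; positivity

lemma pd_coord (a k : Fin 4) (X : Pt) : pd a (fun Y => Y k) X = if k = a then 1 else 0 := by
  unfold pd
  rw [(hasFDerivAt_apply (𝕜 := ℝ) k X).fderiv]
  simp [Pi.single_apply]

lemma pd_quad (c e : ℝ) (X : Pt) (i : Fin 3) :
    pd i.succ (fun Y : Pt => c + Y 0 ^ 2 + e * (Y 1 ^ 2 + Y 2 ^ 2 + Y 3 ^ 2)) X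
      = 2 * e * X i.succ := by
  have hx : ∀ k : Fin 4, HasFDerivAt (fun Y : Pt => Y k)
    (ContinuousLinearMap.proj (R := ℝ) (φ := fun _ : Fin 4 => ℝ) k) X :=
    fun k => hasFDerivAt_apply k X
  have h := (((hx 0).pow 2).const_add c).add
    (((((hx 1).pow 2).add ((hx 2).pow 2)).add ((hx 3).pow 2)).const_mul e)
  have h' := h.fderiv
  unfold pd
  refine (congrArg (fun L => L (Pi.single i.succ (1 : ℝ))) h').trans ?_
  fin_cases i <;> simp <;> ring

lemma rho_grad (X : Pt) (i : Fin 3) : (pd i.succ rho X) ^ 2 ≤ 36 * rho X := by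
  have e1 : (fun Y : Pt => rho Y * (1 + Y 0 ^ 2 + 1 * (Y 1 ^ 2 + Y 2 ^ 2 + Y 3 ^ 2)))
      = fun Y : Pt => (0 + Y 0 ^ 2 + (-1) * (Y 1 ^ 2 + Y 2 ^ 2 + Y 3 ^ 2)) *
        (0 + Y 0 ^ 2 + (-1) * (Y 1 ^ 2 + Y 2 ^ 2 + Y 3 ^ 2)) := by
    funext Y
    have hq : 1 + Y 0 ^ 2 + (Y 1 ^ 2 + Y 2 ^ 2 + Y 3 ^ 2) ≠ 0 := by positivity
    unfold rho
    rw [one_mul, div_mul_cancel₀ _ hq]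
    ring
  have e2 := congrArg (fun F => pd i.succ F X) e1
  have e3 := congrFun e1 X
  beta_reduce at e2 e3
  rw [pd_mul rho_smooth (by fun_prop), pd_mul (by fun_prop) (by fun_prop), pd_quad, pd_quad] at e2
  have hx : X i.succ ^ 2 ≤ X 1 ^ 2 + X 2 ^ 2 + X 3 ^ 2 := by
    fin_cases i <;> simp <;> nlinarith [sq_nonneg (X 1), sq_nonneg (X 2), sq_nonneg (X 3)]
  have hr := rho_nonneg X
  generalize pd i.succ rho X = ρ' at *
  generalize rho X = ρ at *
  generalize X i.succ = x at *
  have hs : 0 ≤ X 1 ^ 2 + X 2 ^ 2 + X 3 ^ 2 := by positivity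
  have ht : 0 ≤ X 0 ^ 2 := by positivity
  generalize X 1 ^ 2 + X 2 ^ 2 + X 3 ^ 2 = s at *
  generalize X 0 ^ 2 = τ at *
  obtain ⟨q, hq⟩ : ∃ q, q = 1 + τ + s := ⟨_, rfl⟩
  obtain ⟨p, hp⟩ : ∃ p, p = τ - s := ⟨_, rfl⟩
  have hq0 : 0 < q := by rw [hq]; positivity
  have e4 : ρ' * q = -2 * x * (2 * p + ρ) := by rw [hq, hp]; linarith
  have e5 : ρ * q = p ^ 2 := by rw [hq, hp]; linarith
  have hpq : |p| ≤ q := by rw [abs_le]; constructor <;> linarith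
  have hρp : ρ ≤ |p| := by
    refine le_of_mul_le_mul_right ?_ hq0
    rw [e5, ← sq_abs, sq]
    exact mul_le_mul_of_nonneg_left hpq (abs_nonneg _)
  have h9 : (2 * p + ρ) ^ 2 ≤ 9 * p ^ 2 := by
    have a1 : |2 * p + ρ| ≤ 3 * |p| := by
      refine (abs_add_le _ _).trans ?_
      rw [abs_mul, abs_two, abs_of_nonneg hr]
      linarith
    calc (2 * p + ρ) ^ 2 = |2 * p + ρ| ^ 2 := (sq_abs _).symm
      _ ≤ (3 * |p|) ^ 2 := by gcongr
      _ = 9 * p ^ 2 := by rw [mul_pow, sq_abs]; norm_num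
  have hxq : x ^ 2 ≤ q := by linarith
  have : (ρ' * q) ^ 2 ≤ 36 * ρ * q ^ 2 := by
    rw [e4]
    calc (-2 * x * (2 * p + ρ)) ^ 2 = 4 * (x ^ 2 * (2 * p + ρ) ^ 2) := by ring
      _ ≤ 4 * (q * (9 * p ^ 2)) := by gcongr
      _ = _ := by rw [← e5]; ring
  rw [mul_pow] at this
  exact le_of_mul_le_mul_right this (by positivity)

/-- The sum of all controlled quadratic quantities. -/
def PP (u : Pt → ℝ) (t : ℝ) (x : Sp) : ℝ :=
  (∑ a, (pd a u (Fin.cons t x)) ^ 2) + (∑ k, ∑ a, (Gam k (pd a u) (Fin.cons t x)) ^ 2)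
    + jb (t + rad x) ^ 2 * (boxc 1 u (Fin.cons t x)) ^ 2

/-- The divergence term. -/
def EE (u : Pt → ℝ) (X : Pt) : ℝ :=
  ∑ i : Fin 3, ∑ j : Fin 3,
    (pd i.succ (fun Y => rho Y * (pd j.succ u Y * pd i.succ (pd j.succ u) Y)) X
      - pd j.succ (fun Y => rho Y * (pd j.succ u Y * pd i.succ (pd i.succ u) Y)) X)

lemma EE_eq {u : Pt → ℝ} (hu : ContDiff ℝ (⊤ : ℕ∞) u) (X : Pt) :
    EE u X = ∑ i : Fin 3, ∑ j : Fin 3,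
      (rho X * (pd i.succ (pd j.succ u) X ^ 2
          - pd i.succ (pd i.succ u) X * pd j.succ (pd j.succ u) X)
        + (pd i.succ rho X * pd j.succ u X * pd i.succ (pd j.succ u) X
          - pd j.succ rho X * pd j.succ u X * pd i.succ (pd i.succ u) X)) := by
  unfold EE
  refine Finset.sum_congr rfl fun i _ => Finset.sum_congr rfl fun j _ => ?_
  have s1 := fun a => smooth_pd hu a
  have s2 := fun a b => smooth_pd (s1 b) a
  rw [pd_mul rho_smooth ((s1 _).mul (s2 _ _)), pd_mul rho_smooth ((s1 _).mul (s2 _ _)),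
    pd_mul (s1 _) (s2 _ _), pd_mul (s1 _) (s2 _ _)]
  have c1 : pd i.succ (pd j.succ u) = pd j.succ (pd i.succ u) := funext fun Y => pd_comm hu _ _ Y
  have c2 : pd i.succ (pd i.succ (pd j.succ u)) X = pd j.succ (pd i.succ (pd i.succ u)) X := by
    rw [c1]; exact pd_comm (s1 _) _ _ X
  rw [c2]
  ring

lemma EE_int {u : Pt → ℝ} (hu : ContDiff ℝ (⊤ : ℕ∞) u) (hc : HasCompactSupport u) (t : ℝ) :
    Integrable (fun x : Sp => EE u (Fin.cons t x)) ∧ ∫ x : Sp, EE u (Fin.cons t x) = 0 := by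
  have s1 := fun a => smooth_pd hu a
  have s2 := fun a b => smooth_pd (s1 b) a
  have sV : ∀ a b c : Fin 4,
      ContDiff ℝ (⊤ : ℕ∞) (fun Y => rho Y * (pd a u Y * pd b (pd c u) Y)) :=
    fun a b c => rho_smooth.mul ((s1 _).mul (s2 _ _))
  have cV : ∀ a b c : Fin 4,
      HasCompactSupport (fun Y => rho Y * (pd a u Y * pd b (pd c u) Y)) := by
    intro a b c
    refine HasCompactSupport.intro hc.isCompact fun X hX => ?_
    simp [pd_off a hX]
  have iV : ∀ d a b c : Fin 4, Integrable (fun x : Sp =>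
      pd d (fun Y => rho Y * (pd a u Y * pd b (pd c u) Y)) (Fin.cons t x)) := by
    intro d a b c
    exact slice_int (cV a b c) t ((smooth_pd (sV a b c) d).continuous.comp (cons_cont t))
      (fun x hx => pd_off _ hx)
  have iW : ∀ i j : Fin 3, Integrable (fun x : Sp =>
      pd i.succ (fun Y => rho Y * (pd j.succ u Y * pd i.succ (pd j.succ u) Y)) (Fin.cons t x)
      - pd j.succ (fun Y => rho Y * (pd j.succ u Y * pd i.succ (pd i.succ u) Y)) (Fin.cons t x)) :=
    fun i j => (iV _ _ _ _).sub (iV _ _ _ _)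
  unfold EE
  constructor
  · exact integrable_finsetSum _ fun i _ => integrable_finsetSum _ fun j _ =>
      iW _ _
  · rw [integral_finsetSum _ fun i _ => integrable_finsetSum _ fun j _ =>
      iW _ _]
    refine Finset.sum_eq_zero fun i _ => ?_
    rw [integral_finsetSum _ fun j _ => iW _ _]
    refine Finset.sum_eq_zero fun j _ => ?_
    rw [integral_sub (iV _ _ _ _) (iV _ _ _ _), slice_div (sV _ _ _) (cV _ _ _),
      slice_div (sV _ _ _) (cV _ _ _), sub_zero]

lemma jb_nonneg (z : ℝ) : 0 ≤ jb z := Real.sqrt_nonneg _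
lemma jb_pos (z : ℝ) : 0 < jb z := Real.sqrt_pos.2 (by positivity)
lemma jb_sq (z : ℝ) : jb z ^ 2 = 1 + z ^ 2 := Real.sq_sqrt (by positivity)
lemma jb_cont : Continuous jb := by unfold jb; fun_prop
lemma rad_cont : Continuous rad := by unfold rad; fun_prop
lemma rad_nonneg (x : Sp) : 0 ≤ rad x := Real.sqrt_nonneg _
lemma rad_sq (t : ℝ) (x : Sp) : rad x ^ 2 = (Fin.cons t x : Pt) 1 ^ 2
    + (Fin.cons t x : Pt) 2 ^ 2 + (Fin.cons t x : Pt) 3 ^ 2 := by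
  unfold rad
  rw [Real.sq_sqrt (by positivity), Fin.sum_univ_three]
  rfl

lemma weight_le (t : ℝ) (ht : 0 ≤ t) (x : Sp) :
    jb (t - rad x) ^ 2 ≤ 2 + 2 * rho (Fin.cons t x) := by
  rw [jb_sq]
  unfold rho
  rw [← rad_sq t x]
  have hr := rad_nonneg x
  generalize rad x = r at *
  simp only [Fin.cons_zero]
  by_cases h : 1 ≤ t ^ 2 + r ^ 2
  · have : (t - r) ^ 2 / 2 ≤ (t ^ 2 - r ^ 2) ^ 2 / (1 + t ^ 2 + r ^ 2) := by
      rw [le_div_iff₀ (by positivity)]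
      have : (1 + t ^ 2 + r ^ 2) ≤ 2 * (t + r) ^ 2 := by nlinarith [mul_nonneg ht hr]
      have := mul_le_mul_of_nonneg_left this (sq_nonneg (t - r))
      nlinarith
    linarith
  · have : 0 ≤ (t ^ 2 - r ^ 2) ^ 2 / (1 + t ^ 2 + r ^ 2) := by positivity
    nlinarith [mul_nonneg ht hr]

lemma pointwise {u : Pt → ℝ} (hu : ContDiff ℝ (⊤ : ℕ∞) u) (t : ℝ) (ht : 0 ≤ t) (x : Sp) :
    (jb (t - rad x) * d2abs u (Fin.cons t x)) ^ 2
      ≤ 400000 * PP u t x + 64 * EE u (Fin.cons t x) := by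
  obtain ⟨X, hX⟩ : ∃ X : Pt, X = Fin.cons t x := ⟨_, rfl⟩
  obtain ⟨D, hDd⟩ : ∃ D : Fin 4 → Fin 4 → ℝ, D = fun a b => pd a (pd b u) X := ⟨_, rfl⟩
  have hD : ∀ a b, D a b = D b a := fun a b => by rw [hDd]; exact pd_comm hu a b X
  have h1 := alg_LT X D hD
  have h2 := alg_H X D hD
  have h3 := alg_abs X (fun j => pd j.succ u X) (fun i => pd i.succ rho X)
    (fun i j => D i.succ j.succ) (fun i => rho_grad X i)
  have hE : EE u X = _ := EE_eq hu X
  have h4 : (d2abs u X) ^ 2 ≤ 16 * ∑ a, ∑ b, D a b ^ 2 := by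
    unfold d2abs
    rw [← Fintype.sum_prod_type', ← Fintype.sum_prod_type']
    have := sq_sum_le_card_mul_sum_sq (s := (Finset.univ : Finset (Fin 4 × Fin 4)))
      (f := fun p => |pd p.1 (pd p.2 u) X|)
    simpa [hDd] using this
  have h5 := weight_le t ht x
  rw [← hX] at h5
  have hG : ∑ k, ∑ a, (Gam k (pd a u) X) ^ 2 = (∑ a, ∑ b, D a b ^ 2) + GG X D := by
    rw [hDd]
    simp only [Fin.sum_univ_eight, Gam, GG, Finset.sum_add_distrib]
    simp [Fin.sum_univ_four, rot, scal]
    ring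
  have hB : boxc 1 u X = D 0 0 - (D 1 1 + D 2 2 + D 3 3) := by
    rw [hDd]
    simp [boxc, Fin.sum_univ_three]
  have hN : X 0 ^ 2 + (X 1 ^ 2 + X 2 ^ 2 + X 3 ^ 2) ≤ jb (t + rad x) ^ 2 := by
    rw [jb_sq, hX, ← rad_sq t x]
    simp only [Fin.cons_zero]
    nlinarith [mul_nonneg ht (rad_nonneg x)]
  have hN2 := mul_le_mul_of_nonneg_right hN (sq_nonneg (boxc 1 u X))
  have hGn := GG_nonneg X D
  have hr := rho_nonneg X
  unfold PP
  rw [← hX, mul_pow]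
  have h6 : jb (t - rad x) ^ 2 * d2abs u X ^ 2
      ≤ (2 + 2 * rho X) * (16 * ∑ a, ∑ b, D a b ^ 2) := by
    apply mul_le_mul h5 h4 (by positivity) (by positivity)
  have hf : ∑ j : Fin 3, (pd j.succ u X) ^ 2 ≤ ∑ a, (pd a u X) ^ 2 := by
    rw [Fin.sum_univ_succ (n := 3)]
    linarith [sq_nonneg (pd 0 u X)]
  have hsq : ∑ a, ∑ b, D a b ^ 2 = D 0 0 ^ 2 + 2 * (D 0 1 ^ 2 + D 0 2 ^ 2 + D 0 3 ^ 2)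
      + ∑ i : Fin 3, ∑ j : Fin 3, D i.succ j.succ ^ 2 := by
    simp only [Fin.sum_univ_three, Fin.sum_univ_four]
    rw [hD 1 0, hD 2 0, hD 3 0]
    simp
    ring
  have hL : ∑ i : Fin 3, D i.succ i.succ = D 1 1 + D 2 2 + D 3 3 := by
    simp [Fin.sum_univ_three]
  rw [← hB] at h1 h2
  have hE2 : EE u X = ∑ i : Fin 3, ∑ j : Fin 3,
      (rho X * (D i.succ j.succ ^ 2 - D i.succ i.succ * D j.succ j.succ)
        + (pd i.succ rho X * pd j.succ u X * D i.succ j.succ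
          - pd j.succ rho X * pd j.succ u X * D i.succ i.succ)) := by
    rw [hE, hDd]
  rw [← hE2, hL] at h3
  have h7 : rho X * ∑ a, ∑ b, D a b ^ 2 = rho X * D 0 0 ^ 2
      + 2 * (rho X * (D 0 1 ^ 2 + D 0 2 ^ 2 + D 0 3 ^ 2))
      + rho X * ∑ i : Fin 3, ∑ j : Fin 3, D i.succ j.succ ^ 2 := by
    rw [hsq]; ring
  have hD0 : 0 ≤ ∑ a, ∑ b, D a b ^ 2 := by positivity
  have hf0 : 0 ≤ ∑ a, (pd a u X) ^ 2 := by positivity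
  have hB0 : 0 ≤ jb (t + rad x) ^ 2 * boxc 1 u X ^ 2 := by positivity
  rw [hG]
  linarith [h1.1, h1.2]

lemma Gam_cont {f : Pt → ℝ} (hf : ContDiff ℝ (⊤ : ℕ∞) f) (k : Fin 8) : Continuous (Gam k f) := by
  have h := fun a => (smooth_pd hf a).continuous
  have hr : ∀ i j, Continuous (rot i j f) := fun i j => by
    unfold rot
    exact ((continuous_apply _).mul (h _)).sub ((continuous_apply _).mul (h _))
  have hs : Continuous (scal f) := by
    unfold scal
    exact continuous_finsetSum _ fun a _ => (continuous_apply _).mul (h _)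
  fin_cases k
  exacts [h 0, h 1, h 2, h 3, hr 1 2, hr 1 3, hr 2 3, hs]

lemma Gam_off {f : Pt → ℝ} {X : Pt} (k : Fin 8) (hX : X ∉ tsupport f) : Gam k f X = 0 := by
  have h := fun a => pd_off a hX
  fin_cases k <;> simp [Gam, rot, scal, h]

lemma le_of_sqrt_le {I Q : ℝ} (hI : 0 ≤ I) (h : I ^ ((1:ℝ)/2) ≤ Q) : I ≤ Q ^ 2 := by
  rw [← Real.sqrt_eq_rpow] at h
  have := Real.sq_sqrt hI
  nlinarith [Real.sqrt_nonneg I]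

lemma PP_int {u : Pt → ℝ} (hu : ContDiff ℝ (⊤ : ℕ∞) u) (hc : HasCompactSupport u) (t : ℝ) :
    Integrable (PP u t) ∧ 0 ≤ Qfac 1 u t ∧ ∫ x : Sp, PP u t x ≤ 10 * Qfac 1 u t ^ 2 := by
  have cc := cons_cont t
  have i0 : Integrable (fun x : Sp => ∑ a, (pd a u (Fin.cons t x)) ^ 2) := by
    refine slice_int hc t ?_ ?_
    · exact continuous_finsetSum _ fun a _ => ((smooth_pd hu a).continuous.comp cc).pow 2
    · intro x hx; simp [pd_off _ hx]
  have i1 : ∀ k, Integrable (fun x : Sp => ∑ a, (Gam k (pd a u) (Fin.cons t x)) ^ 2) := by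
    intro k
    refine slice_int hc t ?_ ?_
    · exact continuous_finsetSum _ fun a _ => ((Gam_cont (smooth_pd hu a) k).comp cc).pow 2
    · intro x hx
      refine Finset.sum_eq_zero fun a _ => ?_
      rw [Gam_off k (fun h => hx (tsupport_pd u a h))]; simp
  have i2 : Integrable (fun x : Sp => jb (t + rad x) ^ 2 * (boxc 1 u (Fin.cons t x)) ^ 2) := by
    refine slice_int hc t ?_ ?_
    · have h : Continuous (boxc 1 u) := by
        unfold boxc
        exact (smooth_pd (smooth_pd hu _) _).continuous.sub (continuous_const.mul
          (continuous_finsetSum _ fun a _ => (smooth_pd (smooth_pd hu _) _).continuous))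
      exact ((jb_cont.comp (continuous_const.add rad_cont)).pow 2).mul ((h.comp cc).pow 2)
    · intro x hx; simp [boxc, pd_pd_off _ _ hx]
  have hQ : Qfac 1 u t = (∫ x : Sp, ∑ a, (pd a u (Fin.cons t x)) ^ 2) ^ ((1:ℝ)/2)
      + (∑ k : Fin 8, (∫ x : Sp, ∑ a, (Gam k (pd a u) (Fin.cons t x)) ^ 2) ^ ((1:ℝ)/2))
      + (∫ x : Sp, jb (t + rad x) ^ 2 * (boxc 1 u (Fin.cons t x)) ^ 2) ^ ((1:ℝ)/2) := by
    unfold Qfac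
    rw [Finset.sum_range_succ, Finset.sum_range_one]
    have q0 : ∀ f : (Fin 0 → Fin 8) → ℝ, ∑ α, f α = f default := fun f =>
      (Fintype.sum_unique f).trans (congrArg f (Subsingleton.elim _ _))
    have q1 : ∀ f : (Fin 1 → Fin 8) → ℝ, ∑ α, f α = ∑ k, f (fun _ => k) := fun f =>
      Fintype.sum_equiv (Equiv.funUnique (Fin 1) (Fin 8)) _ _ (fun α => by
        congr 1; ext i; rw [Subsingleton.elim i 0]; rfl)
    rw [q0, q1]
    rfl
  have n0 : 0 ≤ ∫ x : Sp, ∑ a, (pd a u (Fin.cons t x)) ^ 2 :=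
    integral_nonneg fun x => by positivity
  have n1 : ∀ k, 0 ≤ ∫ x : Sp, ∑ a, (Gam k (pd a u) (Fin.cons t x)) ^ 2 :=
    fun k => integral_nonneg fun x => by positivity
  have n2 : 0 ≤ ∫ x : Sp, jb (t + rad x) ^ 2 * (boxc 1 u (Fin.cons t x)) ^ 2 :=
    integral_nonneg fun x => by positivity
  have p0 := Real.rpow_nonneg n0 ((1:ℝ)/2)
  have p1 := fun k => Real.rpow_nonneg (n1 k) ((1:ℝ)/2)
  have p2 := Real.rpow_nonneg n2 ((1:ℝ)/2)
  have p3 := Finset.sum_nonneg (s := Finset.univ) (fun k _ => p1 k)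
  have i3 : Integrable (fun x : Sp => ∑ k, ∑ a, (Gam k (pd a u) (Fin.cons t x)) ^ 2) :=
    integrable_finsetSum _ fun k _ => i1 k
  refine ⟨(i0.add i3).add i2, by rw [hQ]; linarith, ?_⟩
  have b0 := le_of_sqrt_le n0 (Q := Qfac 1 u t) (by rw [hQ]; linarith)
  have b1 := fun k => le_of_sqrt_le (n1 k) (Q := Qfac 1 u t) (by
    have := Finset.single_le_sum (fun k _ => p1 k) (Finset.mem_univ k)
    rw [hQ]; linarith)
  have b2 := le_of_sqrt_le n2 (Q := Qfac 1 u t) (by rw [hQ]; linarith)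
  have b3 := Finset.sum_le_sum (s := Finset.univ) (fun k _ => b1 k)
  unfold PP
  have i4 : Integrable (fun x : Sp => (∑ a, (pd a u (Fin.cons t x)) ^ 2)
      + ∑ k, ∑ a, (Gam k (pd a u) (Fin.cons t x)) ^ 2) := i0.add i3
  rw [integral_add i4 i2, integral_add i0 i3, integral_finsetSum _ fun k _ => i1 k]
  simp at b3
  linarith

lemma main_est {u : Pt → ℝ} (hu : ContDiff ℝ (⊤ : ℕ∞) u) (hc : HasCompactSupport u)
    (t : ℝ) (ht : 0 ≤ t) :
    (∫ x : Sp, (jb (t - rad x) * d2abs u (Fin.cons t x)) ^ 2) ^ ((1:ℝ)/2)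
      ≤ 2000 * Qfac 1 u t := by
  obtain ⟨h1, h2, h3⟩ := PP_int hu hc t
  obtain ⟨h4, h5⟩ := EE_int hu hc t
  have h6 : ∫ x : Sp, (jb (t - rad x) * d2abs u (Fin.cons t x)) ^ 2
      ≤ ∫ x : Sp, (400000 * PP u t x + 64 * EE u (Fin.cons t x)) :=
    integral_mono_of_nonneg (ae_of_all _ fun x => by positivity)
      ((h1.const_mul _).add (h4.const_mul _)) (ae_of_all _ fun x => pointwise hu t ht x)
  rw [integral_add (h1.const_mul _) (h4.const_mul _), integral_const_mul, integral_const_mul, h5] at h6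
  rw [← Real.sqrt_eq_rpow]
  apply Real.sqrt_le_iff.2 ⟨by positivity, ?_⟩
  nlinarith

/-- inequality (3.9) of the paper, Corollary 3.4. -/
theorem stmt_17 :
    ∃ C : ℝ, 0 < C ∧
      ∀ (u v : Pt → ℝ), ContDiff ℝ (⊤ : ℕ∞) u → HasCompactSupport u →
        ContDiff ℝ (⊤ : ℕ∞) v → HasCompactSupport v →
        ∀ t : ℝ, 0 ≤ t →
          ∫ x : Sp, (jb (t - rad x) / jb (t + rad x)) *
              d2abs u (Fin.cons t x) * gradNorm v (Fin.cons t x) * (jb (rad x))⁻¹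
            ≤ C * (jb t)⁻¹ * Qfac 1 u t *
                (∫ x : Sp, (∑ a, (pd a v (Fin.cons t x)) ^ 2) / jb (rad x) ^ 2) ^ ((1:ℝ)/2) := by
  refine ⟨2000, by norm_num, ?_⟩
  intro u v hu hcu hv hcv t ht
  have cc := cons_cont t
  obtain ⟨F, hF⟩ : ∃ F : Sp → ℝ, F = fun x => jb (t - rad x) * d2abs u (Fin.cons t x) := ⟨_, rfl⟩
  obtain ⟨g, hg⟩ : ∃ g : Sp → ℝ, g = fun x => gradNorm v (Fin.cons t x) * (jb (rad x))⁻¹ :=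
    ⟨_, rfl⟩
  have d0 : ∀ X, 0 ≤ d2abs u X := fun X => by unfold d2abs; positivity
  have g0 : ∀ X, 0 ≤ gradNorm v X := fun X => Real.sqrt_nonneg _
  have F0 : ∀ x, 0 ≤ F x := fun x => by rw [hF]; exact mul_nonneg (jb_nonneg _) (d0 _)
  have G0 : ∀ x, 0 ≤ g x := fun x => by
    rw [hg]; exact mul_nonneg (g0 _) (inv_nonneg.2 (jb_nonneg _))
  have Fc : Continuous F := by
    rw [hF]
    have : Continuous (d2abs u) := by
      unfold d2abs
      exact continuous_finsetSum _ fun a _ => continuous_finsetSum _ fun b _ =>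
        (smooth_pd (smooth_pd hu _) _).continuous.abs
    exact (jb_cont.comp (continuous_const.sub rad_cont)).mul (this.comp cc)
  have Gc : Continuous g := by
    rw [hg]
    have : Continuous (gradNorm v) := by
      unfold gradNorm
      exact Real.continuous_sqrt.comp
        (continuous_finsetSum _ fun a _ => (smooth_pd hv _).continuous.pow 2)
    exact (this.comp cc).mul ((jb_cont.comp rad_cont).inv₀ fun x => (jb_pos _).ne')
  have Fs : HasCompactSupport F := slice_compact hcu t fun x hx => by
    simp [hF, d2abs, pd_pd_off _ _ hx]
  have Gs : HasCompactSupport g := slice_compact hcv t fun x hx => by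
    simp [hg, gradNorm, pd_off _ hx]
  have hol := integral_mul_le_Lp_mul_Lq_of_nonneg (μ := (volume : Measure Sp))
    Real.HolderConjugate.two_two (ae_of_all _ F0) (ae_of_all _ G0)
    (Fc.memLp_of_hasCompactSupport Fs) (Gc.memLp_of_hasCompactSupport Gs)
  simp only [Real.rpow_two] at hol
  have eg : ∀ x, g x ^ 2 = (∑ a, (pd a v (Fin.cons t x)) ^ 2) / jb (rad x) ^ 2 := by
    intro x
    simp only [hg, gradNorm]
    rw [mul_pow, Real.sq_sqrt (by positivity), inv_pow, div_eq_mul_inv]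
  simp only [eg] at hol
  have hm := main_est hu hcu t ht
  have hFe : ∫ x : Sp, F x ^ 2 = ∫ x : Sp, (jb (t - rad x) * d2abs u (Fin.cons t x)) ^ 2 := by
    rw [hF]
  rw [← hFe] at hm
  have hI : Integrable (fun x => F x * g x) :=
    (Fc.mul Gc).integrable_of_hasCompactSupport Fs.mul_right
  have h1 : ∫ x : Sp, (jb (t - rad x) / jb (t + rad x)) *
              d2abs u (Fin.cons t x) * gradNorm v (Fin.cons t x) * (jb (rad x))⁻¹
      ≤ ∫ x : Sp, (jb t)⁻¹ * (F x * g x) := by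
    refine integral_mono_of_nonneg (ae_of_all _ fun x => ?_) (hI.const_mul _)
      (ae_of_all _ fun x => ?_)
    · exact mul_nonneg (mul_nonneg (mul_nonneg (div_nonneg (jb_nonneg _) (jb_nonneg _)) (d0 _))
        (g0 _)) (inv_nonneg.2 (jb_nonneg _))
    · have hj : (jb (t + rad x))⁻¹ ≤ (jb t)⁻¹ := by
        refine inv_anti₀ (jb_pos _) (Real.sqrt_le_sqrt ?_)
        nlinarith [rad_nonneg x, mul_nonneg ht (rad_nonneg x)]
      have := mul_le_mul_of_nonneg_right hj (mul_nonneg (F0 x) (G0 x))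
      refine le_trans (le_of_eq ?_) this
      simp only [hF, hg]
      ring
  rw [integral_const_mul] at h1
  have hJ : 0 ≤ (∫ x : Sp, (∑ a, (pd a v (Fin.cons t x)) ^ 2) / jb (rad x) ^ 2) ^ ((1:ℝ)/2) :=
    Real.rpow_nonneg (integral_nonneg fun x => by positivity) _
  calc _ ≤ _ := h1
    _ ≤ (jb t)⁻¹ * ((2000 * Qfac 1 u t) * _) :=
      mul_le_mul_of_nonneg_left (hol.trans (mul_le_mul_of_nonneg_right hm hJ))
        (inv_nonneg.2 (jb_nonneg _))
    _ = _ := by ring
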